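/- Let χ₋₄ denote the nontrivial Dirichlet character modulo 4 and L(s, χ₋₄) its Dirichlet L-function. For every δ > 0 there exist c > 0 and T₀ > 0 such that for all T ≥ T₀, the set {s ∈ ℂ : 3 < Re(s) < 3 + δ, Im(s) ∈ [0,T], ζ(s) L(s − 2, χ₋₄) − 4 ζ(s − 2) L(s, χ₋₄) = 0} contains at least cT elements; in particular the Epstein zeta function ζ(s; I₆) = −4(ζ(s) L(s−2, χ₋₄) − 4 ζ(s−2) L(s, χ₋₄)) has infinitely many zeros in the half-plane Re(s) > 3. -/

import Mathlib

open Complex Filter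

/-- The set `S` contains at least `x` elements. -/
def AtLeastCard (S : Set ℂ) (x : ℝ) : Prop :=
  ∃ F : Finset ℂ, ↑F ⊆ S ∧ x ≤ (F.card : ℝ)

open MeasureTheory Topology

lemma tendsto_mean_exp {a : ℝ} (ha : a ≠ 0) :
    Tendsto (fun T : ℝ ↦ (T : ℂ)⁻¹ * ∫ t in (0 : ℝ)..T, exp (a * I * t)) atTop (𝓝 0) := by
  have haI : (a * I : ℂ) ≠ 0 := by simp [ha]
  have hbound : ∀ T : ℝ, ‖∫ t in (0 : ℝ)..T, exp (a * I * t)‖ ≤ 2 / |a| := by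
    intro T
    rw [integral_exp_mul_complex haI, norm_div]
    have h1 : ‖(a * I : ℂ)‖ = |a| := by simp
    rw [h1]
    gcongr
    refine (norm_sub_le _ _).trans ?_
    have h2 : ‖exp (a * I * T)‖ = 1 := by
      rw [show (a * I * T : ℂ) = ((a * T : ℝ) : ℂ) * I by push_cast; ring, norm_exp_ofReal_mul_I]
    rw [h2]
    norm_num
  have hinv : Tendsto (fun T : ℝ ↦ (T : ℂ)⁻¹) atTop (𝓝 0) := by
    have := (Complex.continuous_ofReal.tendsto 0).comp tendsto_inv_atTop_zero
    simpa [Function.comp_def] using this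
  exact hinv.zero_mul_isBoundedUnder_le (isBoundedUnder_of ⟨_, hbound⟩)

section Kronecker

variable {d : Type*}

/-- The one-parameter subgroup of the torus with frequencies `v`. -/
def torusFlow (v : d → ℝ) (t : ℝ) : UnitAddTorus d := fun i ↦ ((t * v i : ℝ) : UnitAddCircle)

lemma continuous_torusFlow (v : d → ℝ) : Continuous (torusFlow v) := by
  refine continuous_pi fun i ↦ ?_
  exact (AddCircle.continuous_mk' 1).comp (by fun_prop)

variable [Fintype d]

lemma mFourier_torusFlow (v : d → ℝ) (n : d → ℤ) (t : ℝ) :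
    UnitAddTorus.mFourier n (torusFlow v t) =
      exp ((2 * Real.pi * ∑ i, n i * v i : ℝ) * I * t) := by
  simp only [UnitAddTorus.mFourier, ContinuousMap.coe_mk, torusFlow, fourier_coe_apply]
  rw [← Complex.exp_sum]
  congr 1
  push_cast
  simp only [Finset.mul_sum, Finset.sum_mul]
  refine Finset.sum_congr rfl fun i _ ↦ ?_
  ring

lemma integral_mFourier_eq_zero {n : d → ℤ} (hn : n ≠ 0) :
    ∫ x, UnitAddTorus.mFourier n x ∂(Measure.addHaar : Measure (UnitAddTorus d)) = 0 := by
  classical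
  obtain ⟨i, hi⟩ := Function.ne_iff.mp hn
  have hi' : (n i : ℝ) ≠ 0 := by exact_mod_cast hi
  set y : UnitAddTorus d := torusFlow (Pi.single i (1 / (2 * n i) : ℝ)) 1 with hy
  have hyval : UnitAddTorus.mFourier n y = -1 := by
    rw [hy, mFourier_torusFlow]
    have : ∑ j, (n j : ℝ) * (Pi.single i (1 / (2 * n i) : ℝ) : d → ℝ) j = 1 / 2 := by
      rw [Finset.sum_eq_single i]
      · rw [Pi.single_eq_same]; field_simp
      · intro j _ hj; simp [hj]
      · simp
    rw [this, ← Complex.exp_pi_mul_I]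
    congr 1
    push_cast
    ring
  have hadd : ∀ x, UnitAddTorus.mFourier n (x + y) = -UnitAddTorus.mFourier n x := by
    intro x
    have : UnitAddTorus.mFourier n (x + y) =
        UnitAddTorus.mFourier n x * UnitAddTorus.mFourier n y := by
      simp [UnitAddTorus.mFourier, fourier_apply, smul_add, AddCircle.toCircle_add,
        Finset.prod_mul_distrib]
    rw [this, hyval]; ring
  have h := integral_add_right_eq_self (μ := (Measure.addHaar : Measure (UnitAddTorus d)))
    (fun x ↦ UnitAddTorus.mFourier n x) y
  simp only [hadd, integral_neg] at h
  exact self_eq_neg.mp h.symm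

lemma tendsto_mean_torusFlow {v : d → ℝ} (hv : ∀ n : d → ℤ, ∑ i, n i * v i = 0 → n = 0)
    {P : C(UnitAddTorus d, ℂ)}
    (hP : P ∈ Submodule.span ℂ (Set.range (UnitAddTorus.mFourier (d := d)))) :
    Tendsto (fun T : ℝ ↦ (T : ℂ)⁻¹ * ∫ t in (0 : ℝ)..T, P (torusFlow v t)) atTop
      (𝓝 ((∫ x, P x ∂Measure.addHaar) /
        (Measure.addHaar : Measure (UnitAddTorus d)).real Set.univ)) := by
  have hint : ∀ (Q : C(UnitAddTorus d, ℂ)) (T : ℝ),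
      IntervalIntegrable (fun t ↦ Q (torusFlow v t)) volume 0 T := fun Q T ↦
    (Q.continuous.comp (continuous_torusFlow v)).intervalIntegrable _ _
  have hint' : ∀ Q : C(UnitAddTorus d, ℂ), Integrable Q Measure.addHaar := fun Q ↦
    Q.continuous.integrable_of_hasCompactSupport (HasCompactSupport.of_compactSpace _)
  induction hP using Submodule.span_induction with
  | mem P hP =>
    obtain ⟨n, rfl⟩ := hP
    rcases eq_or_ne n 0 with rfl | hn
    · have hne : ((Measure.addHaar : Measure (UnitAddTorus d)).real Set.univ : ℂ) ≠ 0 := by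
        have : (Measure.addHaar : Measure (UnitAddTorus d)).real Set.univ ≠ 0 := by
          simp [Measure.real, ENNReal.toReal_eq_zero_iff, NeZero.ne]
        exact_mod_cast this
      simp only [UnitAddTorus.mFourier_zero, ContinuousMap.one_apply]
      refine (tendsto_congr' ?_).mpr tendsto_const_nhds
      filter_upwards [eventually_gt_atTop 0] with T hT
      have : (T : ℂ) ≠ 0 := by exact_mod_cast hT.ne'
      simp [this, hne]
    · rw [integral_mFourier_eq_zero hn, zero_div]
      simp only [mFourier_torusFlow]
      refine tendsto_mean_exp fun h ↦ hn (hv n ?_)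
      simpa [Real.pi_ne_zero] using h
  | zero => simp
  | add P Q _ _ hP hQ =>
    simp only [ContinuousMap.add_apply]
    rw [integral_add (hint' P) (hint' Q), add_div]
    refine (hP.add hQ).congr fun T ↦ ?_
    rw [intervalIntegral.integral_add (hint P T) (hint Q T)]
    ring
  | smul c P _ hP =>
    simp only [ContinuousMap.smul_apply, smul_eq_mul]
    rw [integral_const_mul, mul_div_assoc]
    refine (hP.const_mul c).congr fun T ↦ ?_
    rw [intervalIntegral.integral_const_mul]
    ring

/-- **Kronecker's theorem**: a flow with rationally independent frequencies is dense. -/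
theorem denseRange_torusFlow {v : d → ℝ} (hv : ∀ n : d → ℤ, ∑ i, n i * v i = 0 → n = 0) :
    DenseRange (torusFlow v) := by
  set μ : Measure (UnitAddTorus d) := Measure.addHaar
  by_contra hdense
  obtain ⟨θ, hθ⟩ := not_forall.mp hdense
  obtain ⟨f, hf0, hf1, hf⟩ := exists_continuous_zero_one_of_isClosed
    (isClosed_closure (s := Set.range (torusFlow v))) (isClosed_singleton (x := θ))
    (Set.disjoint_singleton_right.mpr hθ)
  have hpos : 0 < ∫ x, f x ∂μ := by
    refine f.continuous.integral_pos_of_hasCompactSupport_nonneg_nonzero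
      (HasCompactSupport.of_compactSpace _) (fun x ↦ (hf x).1) (x := θ) ?_
    rw [hf1 rfl]; exact one_ne_zero
  have hm : 0 < μ.real Set.univ := by
    have : μ.real Set.univ ≠ 0 := by
      simp [Measure.real, ENNReal.toReal_eq_zero_iff, NeZero.ne]
    positivity
  set F : C(UnitAddTorus d, ℂ) := ⟨fun x ↦ (f x : ℂ), by fun_prop⟩ with hF
  set ε : ℝ := (∫ x, f x ∂μ) / (3 * μ.real Set.univ) with hε
  have hεpos : 0 < ε := by positivity
  have hmem : F ∈ (Submodule.span ℂ
      (Set.range (UnitAddTorus.mFourier (d := d)))).topologicalClosure := by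
    rw [UnitAddTorus.span_mFourier_closure_eq_top]; trivial
  obtain ⟨P, hP, hPF⟩ := Metric.mem_closure_iff.mp hmem ε hεpos
  have hdist : ∀ x, ‖(f x : ℂ) - P x‖ ≤ ε := fun x ↦
    ((F - P).norm_coe_le_norm x).trans (by rw [← dist_eq_norm]; exact hPF.le)
  have hsmall : ∀ t, ‖P (torusFlow v t)‖ ≤ ε := fun t ↦ by
    have := hdist (torusFlow v t)
    rwa [hf0 (subset_closure ⟨t, rfl⟩), Pi.zero_apply, ofReal_zero, zero_sub, norm_neg] at this
  have hlim := (tendsto_mean_torusFlow hv hP).norm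
  have hle : ‖(∫ x, P x ∂μ) / (μ.real Set.univ : ℂ)‖ ≤ ε := by
    refine le_of_tendsto hlim ?_
    filter_upwards [eventually_gt_atTop 0] with T hT
    have := intervalIntegral.norm_integral_le_of_norm_le_const (a := 0) (b := T)
      (f := fun t ↦ P (torusFlow v t)) (C := ε) fun t _ ↦ hsmall t
    rw [norm_mul, norm_inv, norm_real, Real.norm_of_nonneg hT.le]
    rw [sub_zero, abs_of_pos hT] at this
    calc T⁻¹ * _ ≤ T⁻¹ * (ε * T) := by gcongr
      _ = ε := by field_simp
  rw [norm_div, norm_real, Real.norm_of_nonneg hm.le, div_le_iff₀ hm] at hle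
  have hint : ∀ Q : C(UnitAddTorus d, ℂ), Integrable Q μ := fun Q ↦
    Q.continuous.integrable_of_hasCompactSupport (HasCompactSupport.of_compactSpace _)
  have hdiff : ‖(∫ x, F x ∂μ) - ∫ x, P x ∂μ‖ ≤ ε * μ.real Set.univ := by
    rw [← integral_sub (hint F) (hint P)]
    exact norm_integral_le_of_norm_le_const (Eventually.of_forall hdist)
  have hFint : ∫ x, F x ∂μ = ((∫ x, f x ∂μ : ℝ) : ℂ) := integral_ofReal
  have hnorm : ‖∫ x, F x ∂μ‖ = 3 * (ε * μ.real Set.univ) := by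
    rw [hFint, norm_real, Real.norm_of_nonneg hpos.le, hε]
    field_simp
  have := norm_le_norm_sub_add (∫ x, F x ∂μ) (∫ x, P x ∂μ)
  have : 0 < ε * μ.real Set.univ := by positivity
  linarith

lemma exists_forall_norm_exp_sub_lt {v : d → ℝ}
    (hv : ∀ n : d → ℤ, ∑ i, n i * v i = 0 → n = 0) {u : d → ℂ} (hu : ∀ i, ‖u i‖ = 1)
    {ε : ℝ} (hε : 0 < ε) : ∃ t : ℝ, ∀ i, ‖exp (t * v i * I) - u i‖ < ε := by
  have hv' : ∀ n : d → ℤ, ∑ i, n i * (v i / (2 * Real.pi)) = 0 → n = 0 := by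
    intro n hn
    refine hv n ?_
    simp only [← mul_div_assoc, ← Finset.sum_div] at hn
    simpa [Real.pi_ne_zero] using hn
  set θ : UnitAddTorus d := torusFlow (fun i ↦ (u i).arg / (2 * Real.pi)) 1
  have key : ∀ (w : d → ℝ) (t : ℝ) (i : d),
      fourier 1 (torusFlow (fun i ↦ w i / (2 * Real.pi)) t i) = exp (t * w i * I) := by
    intro w t i
    rw [torusFlow, fourier_coe_apply]
    congr 1
    have : (Real.pi : ℂ) ≠ 0 := by exact_mod_cast Real.pi_ne_zero
    push_cast
    field_simp
  have hopen : IsOpen {x : UnitAddTorus d | ∀ i, ‖fourier 1 (x i) - u i‖ < ε} := by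
    rw [Set.ofPred_forall]
    refine isOpen_iInter_of_finite fun i ↦ ?_
    exact isOpen_lt (by fun_prop) continuous_const
  have hθ : θ ∈ {x : UnitAddTorus d | ∀ i, ‖fourier 1 (x i) - u i‖ < ε} := by
    intro i
    have h1 : exp ((u i).arg * I) = u i := by
      simpa [hu i] using norm_mul_exp_arg_mul_I (u i)
    simpa [θ, key, h1] using hε
  obtain ⟨t, ht⟩ := (denseRange_torusFlow hv').exists_mem_open hopen ⟨θ, hθ⟩
  exact ⟨t, fun i ↦ by simpa [key] using ht i⟩

end Kronecker

lemma sum_log_prime_eq_zero {s : Finset ℕ} (hs : ∀ p ∈ s, p.Prime) {n : s → ℤ}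
    (h : ∑ p : s, (n p : ℝ) * Real.log (p : ℕ) = 0) : n = 0 := by
  have hprime : ∀ p : s, (p : ℕ).Prime := fun p ↦ hs p p.2
  have hlog : ∀ k : s → ℕ, Real.log ((∏ p : s, (p : ℕ) ^ k p : ℕ) : ℝ) =
      ∑ p : s, (k p : ℝ) * Real.log (p : ℕ) := by
    intro k
    push_cast
    rw [Real.log_prod fun p _ ↦ pow_ne_zero _ (by exact_mod_cast (hprime p).ne_zero)]
    simp
  have hfact : ∀ (k : s → ℕ) (q : s), (∏ p : s, (p : ℕ) ^ k p).factorization q = k q := by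
    intro k q
    rw [Nat.factorization_prod fun p _ ↦ pow_ne_zero _ (hprime p).ne_zero,
      Finset.sum_apply', Finset.sum_eq_single q]
    · simp [(hprime q).factorization_pow]
    · intro p _ hpq
      rw [(hprime p).factorization_pow, Finsupp.single_eq_of_ne]
      exact fun h ↦ hpq (Subtype.ext h.symm)
    · simp
  have hpos : ∀ k : s → ℕ, (0 : ℝ) < (∏ p : s, (p : ℕ) ^ k p : ℕ) := fun k ↦ by
    exact_mod_cast Finset.prod_pos fun p _ ↦ pow_pos (hprime p).pos _
  have heq : ∏ p : s, (p : ℕ) ^ (n p).toNat = ∏ p : s, (p : ℕ) ^ (-n p).toNat := by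
    have : Real.log ((∏ p : s, (p : ℕ) ^ (n p).toNat : ℕ) : ℝ) =
        Real.log ((∏ p : s, (p : ℕ) ^ (-n p).toNat : ℕ) : ℝ) := by
      rw [hlog, hlog, ← sub_eq_zero, ← Finset.sum_sub_distrib, ← h]
      refine Finset.sum_congr rfl fun p _ ↦ ?_
      rw [← sub_mul]
      congr 1
      exact_mod_cast Int.toNat_sub_toNat_neg (n p)
    exact_mod_cast Real.log_injOn_pos (hpos _) (hpos _) this
  ext q
  have := hfact (fun p ↦ (n p).toNat) q
  rw [heq, hfact] at this
  simp only [Pi.zero_apply]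
  omega

/-- The weighted `ℓ¹` norm controlling Dirichlet series with coefficients `a` on `Re s ≥ σ`. -/
noncomputable def dirichletNorm (σ : ℝ) (a : ℕ → ℂ) : ℝ := ∑' n : ℕ, ‖a n‖ * (n : ℝ) ^ (-σ)

lemma summable_dirichletNorm {σ C : ℝ} (hσ : 1 < σ) {a : ℕ → ℂ} (ha : ∀ n ≠ 0, ‖a n‖ ≤ C) :
    Summable fun n : ℕ ↦ ‖a n‖ * (n : ℝ) ^ (-σ) := by
  refine Summable.of_nonneg_of_le (fun n ↦ by positivity) (fun n ↦ ?_)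
    ((Real.summable_nat_rpow (p := -σ)|>.mpr (by linarith)).mul_left C)
  rcases eq_or_ne n 0 with rfl | hn
  · simp [Real.zero_rpow (by linarith : -σ ≠ 0)]
  · gcongr
    exact ha n hn

lemma dirichletNorm_nonneg (σ : ℝ) (a : ℕ → ℂ) : 0 ≤ dirichletNorm σ a :=
  tsum_nonneg fun n ↦ by positivity

lemma dirichletNorm_add_le {σ C D : ℝ} (hσ : 1 < σ) {a b : ℕ → ℂ} (ha : ∀ n ≠ 0, ‖a n‖ ≤ C)
    (hb : ∀ n ≠ 0, ‖b n‖ ≤ D) :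
    dirichletNorm σ (a + b) ≤ dirichletNorm σ a + dirichletNorm σ b := by
  have hab : ∀ n ≠ 0, ‖(a + b) n‖ ≤ C + D := fun n hn ↦
    (norm_add_le _ _).trans (add_le_add (ha n hn) (hb n hn))
  rw [dirichletNorm, dirichletNorm, dirichletNorm,
    ← (summable_dirichletNorm hσ ha).tsum_add (summable_dirichletNorm hσ hb)]
  refine (summable_dirichletNorm hσ hab).tsum_le_tsum (fun n ↦ ?_)
    ((summable_dirichletNorm hσ ha).add (summable_dirichletNorm hσ hb))
  rw [← add_mul]
  gcongr
  exact norm_add_le _ _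

lemma dirichletNorm_mono {σ C : ℝ} (hσ : 1 < σ) {a b : ℕ → ℂ} (hb : ∀ n ≠ 0, ‖b n‖ ≤ C)
    (hab : ∀ n ≠ 0, ‖a n‖ ≤ ‖b n‖) : dirichletNorm σ a ≤ dirichletNorm σ b := by
  refine (summable_dirichletNorm hσ fun n hn ↦ (hab n hn).trans (hb n hn)).tsum_le_tsum
    (fun n ↦ ?_) (summable_dirichletNorm hσ hb)
  rcases eq_or_ne n 0 with rfl | hn
  · simp [Real.zero_rpow (by linarith : -σ ≠ 0)]
  · gcongr
    exact hab n hn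

lemma tendsto_dirichletNorm_zero {σ C : ℝ} (hσ : 1 < σ) {a : ℕ → ℕ → ℂ}
    (ha : ∀ k, ∀ n ≠ 0, ‖a k n‖ ≤ C) (hlim : ∀ n ≠ 0, Tendsto (fun k ↦ a k n) atTop (𝓝 0)) :
    Tendsto (fun k ↦ dirichletNorm σ (a k)) atTop (𝓝 0) := by
  have h0 : ∑' n : ℕ, (0 : ℝ) = 0 := tsum_zero
  rw [← h0]
  refine tendsto_tsum_of_dominated_convergence (bound := fun n : ℕ ↦ C * (n : ℝ) ^ (-σ))
    ((Real.summable_nat_rpow (p := -σ)|>.mpr (by linarith)).mul_left C) (fun n ↦ ?_)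
    (Eventually.of_forall fun k n ↦ ?_)
  · rcases eq_or_ne n 0 with rfl | hn
    · simp [Real.zero_rpow (by linarith : -σ ≠ 0)]
    · simpa using (hlim n hn).norm.mul_const ((n : ℝ) ^ (-σ))
  · rcases eq_or_ne n 0 with rfl | hn
    · simp [Real.zero_rpow (by linarith : -σ ≠ 0)]
    · rw [Real.norm_of_nonneg (by positivity)]
      gcongr
      exact ha k n hn

lemma norm_LSeries_le_dirichletNorm {σ C : ℝ} (hσ : 1 < σ) {a : ℕ → ℂ} (ha : ∀ n ≠ 0, ‖a n‖ ≤ C)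
    {s : ℂ} (hs : σ ≤ s.re) : ‖LSeries a s‖ ≤ dirichletNorm σ a := by
  refine tsum_of_norm_bounded (summable_dirichletNorm hσ ha).hasSum fun n ↦ ?_
  rcases eq_or_ne n 0 with rfl | hn
  · simp [Real.zero_rpow (by linarith : -σ ≠ 0)]
  · rw [LSeries.norm_term_eq, if_neg hn, div_eq_mul_inv, ← Real.rpow_neg (by positivity)]
    have : (1 : ℝ) ≤ n := by exact_mod_cast Nat.one_le_iff_ne_zero.mpr hn
    gcongr

/-- The arithmetic function `n ↦ n ^ (-it)`. -/
noncomputable def archTwist (t : ℝ) (n : ℕ) : ℂ := (n : ℂ) ^ (-(t * I))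

lemma norm_archTwist (t : ℝ) {n : ℕ} (hn : n ≠ 0) : ‖archTwist t n‖ = 1 := by
  rw [archTwist, norm_natCast_cpow_of_pos (Nat.pos_of_ne_zero hn)]
  simp

lemma archTwist_add (s t : ℝ) {n : ℕ} (hn : n ≠ 0) :
    archTwist (s + t) n = archTwist s n * archTwist t n := by
  rw [archTwist, archTwist, archTwist, ← cpow_add _ _ (by exact_mod_cast hn)]
  congr 1
  push_cast
  ring

lemma archTwist_mul (t : ℝ) (m n : ℕ) : archTwist t (m * n) = archTwist t m * archTwist t n := by
  rw [archTwist, Nat.cast_mul, natCast_mul_natCast_cpow]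
  rfl

lemma archTwist_eq_exp (t : ℝ) {n : ℕ} (hn : n ≠ 0) :
    archTwist t n = exp ((-t : ℝ) * (Real.log n : ℝ) * I) := by
  rw [archTwist, cpow_def_of_ne_zero (by exact_mod_cast hn), natCast_log]
  congr 1
  push_cast
  ring

lemma LSeries_mul_archTwist (a : ℕ → ℂ) (t : ℝ) (s : ℂ) :
    LSeries (fun n ↦ archTwist t n * a n) s = LSeries a (s + t * I) := by
  refine tsum_congr fun n ↦ ?_
  rcases eq_or_ne n 0 with rfl | hn
  · simp
  · have hn' : (n : ℂ) ≠ 0 := by exact_mod_cast hn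
    rw [LSeries.term_of_ne_zero hn, LSeries.term_of_ne_zero hn, cpow_add _ _ hn', archTwist,
      cpow_neg]
    field_simp

lemma exists_finset_dirichletNorm_archTwist_sub_lt {σ ε : ℝ} (hσ : 1 < σ) (hε : 0 < ε) :
    ∃ S : Finset ℝ, ∀ t : ℝ, ∃ s ∈ S, dirichletNorm σ (archTwist t - archTwist s) < ε := by
  by_contra! hcon
  obtain ⟨f, hf⟩ := exists_seq_of_forall_finset_exists (fun _ : ℝ ↦ True)
    (fun s t ↦ ε ≤ dirichletNorm σ (archTwist t - archTwist s)) fun S _ ↦ by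
      obtain ⟨t, ht⟩ := hcon S
      exact ⟨t, trivial, ht⟩
  have hcomp : IsCompact (Set.univ.pi fun _ : ℕ ↦ Metric.closedBall (0 : ℂ) 1) :=
    isCompact_univ_pi fun _ ↦ isCompact_closedBall _ _
  have hmem : ∀ k, archTwist (f k) ∈ Set.univ.pi fun _ : ℕ ↦ Metric.closedBall (0 : ℂ) 1 := by
    intro k n _
    rw [mem_closedBall_zero_iff]
    rcases eq_or_ne n 0 with rfl | hn
    · rcases eq_or_ne (f k) 0 with h | h <;> simp [archTwist, h]
    · exact (norm_archTwist _ hn).le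
  obtain ⟨b, -, φ, hφ, hb⟩ := hcomp.tendsto_subseq hmem
  have hb' := fun n ↦ (tendsto_pi_nhds.mp hb) n
  have hlim := tendsto_dirichletNorm_zero (C := 2) hσ
    (a := fun k ↦ archTwist (f (φ (k + 1))) - archTwist (f (φ k)))
    (fun k n hn ↦ (norm_sub_le _ _).trans (by
      rw [norm_archTwist _ hn, norm_archTwist _ hn]; norm_num))
    (fun n _ ↦ by
      have := ((hb' n).comp (tendsto_add_atTop_nat 1)).sub (hb' n)
      simpa using this)
  obtain ⟨k, hk⟩ := (hlim.eventually_lt_const hε).exists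
  exact absurd hk (not_lt.mpr (hf.2 _ _ (hφ (Nat.lt_succ_self k))))

lemma exists_seq_tendsto_archTwist {f : ℕ →*₀ ℂ} (hf : ∀ n ≠ 0, ‖f n‖ = 1) :
    ∃ t : ℕ → ℝ, ∀ n ≠ 0, Tendsto (fun k ↦ archTwist (t k) n) atTop (𝓝 (f n)) := by
  have hex : ∀ k : ℕ, ∃ t : ℝ, ∀ p < k, p.Prime → ‖archTwist t p - f p‖ < 1 / ((k : ℝ) + 1) := by
    intro k
    have hs : ∀ p ∈ (Finset.range k).filter Nat.Prime, p.Prime := fun p hp ↦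
      (Finset.mem_filter.mp hp).2
    obtain ⟨t, ht⟩ := exists_forall_norm_exp_sub_lt (fun n h ↦ sum_log_prime_eq_zero hs h)
      (u := fun p : (Finset.range k).filter Nat.Prime ↦ f p) (fun p ↦ hf _ (hs p p.2).ne_zero)
      (ε := 1 / ((k : ℝ) + 1)) (by positivity)
    refine ⟨-t, fun p hpk hp ↦ ?_⟩
    rw [archTwist_eq_exp _ hp.ne_zero, neg_neg]
    exact ht ⟨p, by simp [hpk, hp]⟩
  choose t ht using hex
  refine ⟨t, fun n ↦ ?_⟩
  induction n using Nat.recOnMul with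
  | zero => simp
  | one => simp [archTwist]
  | prime p hp =>
    intro _
    rw [tendsto_iff_norm_sub_tendsto_zero]
    refine squeeze_zero' (Eventually.of_forall fun _ ↦ norm_nonneg _) ?_
      (tendsto_one_div_add_atTop_nhds_zero_nat (𝕜 := ℝ))
    filter_upwards [eventually_gt_atTop p] with k hk
    exact (ht k p hk hp).le
  | mul m n hm hn =>
    intro hmn
    simp only [archTwist_mul, map_mul]
    exact (hm (left_ne_zero_of_mul hmn)).mul (hn (right_ne_zero_of_mul hmn))

lemma exists_mem_Icc_dirichletNorm_archTwist_sub_lt {f : ℕ →*₀ ℂ} (hf : ∀ n ≠ 0, ‖f n‖ = 1)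
    {σ ε : ℝ} (hσ : 1 < σ) (hε : 0 < ε) :
    ∃ R : ℝ, 0 < R ∧ ∀ x : ℝ, ∃ t ∈ Set.Icc (x - R) (x + R),
      dirichletNorm σ (archTwist t - f) < ε := by
  have hsub : ∀ (g h : ℕ → ℂ), (∀ n ≠ 0, ‖g n‖ = 1) → (∀ n ≠ 0, ‖h n‖ = 1) →
      ∀ n ≠ 0, ‖(g - h) n‖ ≤ 2 := fun g h hg hh n hn ↦
    (norm_sub_le _ _).trans (by rw [hg n hn, hh n hn]; norm_num)
  obtain ⟨u, hu⟩ := exists_seq_tendsto_archTwist hf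
  have hlim := tendsto_dirichletNorm_zero hσ (a := fun k ↦ archTwist (u k) - f)
    (fun k ↦ hsub _ _ (fun n hn ↦ norm_archTwist _ hn) hf)
    (fun n hn ↦ by simpa using (hu n hn).sub_const (f n))
  obtain ⟨k, hk⟩ := (hlim.eventually_lt_const (half_pos hε)).exists
  obtain ⟨S, hS⟩ := exists_finset_dirichletNorm_archTwist_sub_lt hσ (half_pos hε)
  refine ⟨1 + |u k| + ∑ s ∈ S, |s|, by positivity, fun x ↦ ?_⟩
  obtain ⟨s, hsS, hs⟩ := hS x
  have hs' : |s| ≤ ∑ s ∈ S, |s| := Finset.single_le_sum (f := fun s ↦ |s|)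
    (fun _ _ ↦ abs_nonneg _) hsS
  refine ⟨x - s + u k, ⟨?_, ?_⟩, ?_⟩
  · linarith [le_abs_self s, neg_abs_le (u k)]
  · linarith [neg_abs_le s, le_abs_self (u k)]
  · have hsplit : archTwist (x - s + u k) - f =
        (archTwist (x - s + u k) - archTwist (u k)) + (archTwist (u k) - f) := by abel
    rw [hsplit]
    refine (dirichletNorm_add_le hσ (hsub _ _ (fun n hn ↦ norm_archTwist _ hn)
      (fun n hn ↦ norm_archTwist _ hn)) (hsub _ _ (fun n hn ↦ norm_archTwist _ hn) hf)).trans_lt ?_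
    have hle : dirichletNorm σ (archTwist (x - s + u k) - archTwist (u k)) ≤
        dirichletNorm σ (archTwist x - archTwist s) := by
      refine dirichletNorm_mono hσ (hsub _ _ (fun n hn ↦ norm_archTwist _ hn)
        (fun n hn ↦ norm_archTwist _ hn)) fun n hn ↦ ?_
      have h1 : archTwist x n = archTwist (x - s) n * archTwist s n := by
        rw [← archTwist_add _ _ hn, sub_add_cancel]
      rw [Pi.sub_apply, Pi.sub_apply, h1, archTwist_add _ _ hn, ← sub_one_mul, ← sub_one_mul,
        norm_mul, norm_mul, norm_archTwist _ hn, norm_archTwist _ hn]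
    linarith

section TwistedEpstein

variable (χ : DirichletCharacter ℂ 4)

/-- The function `L(s, aχ) L(s + 2, a) - 4 L(s, a) L(s + 2, aχ)`; for `a = 1` it is the Epstein
zeta function of `I₆` at `s + 2`, up to the factor `-4`. -/
noncomputable def epsteinTwist (a : ℕ → ℂ) (s : ℂ) : ℂ :=
  LSeries (fun n ↦ a n * χ n) s * LSeries a (s + 2) -
    4 * LSeries a s * LSeries (fun n ↦ a n * χ n) (s + 2)

lemma norm_mul_character_le {a : ℕ → ℂ} {C : ℝ} (ha : ∀ n ≠ 0, ‖a n‖ ≤ C) :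
    ∀ n ≠ 0, ‖a n * χ n‖ ≤ C := fun n hn ↦ by
  rw [norm_mul]
  exact (mul_le_of_le_one_right (norm_nonneg _) (χ.norm_le_one _)).trans (ha n hn)

lemma analyticOnNhd_LSeries {a : ℕ → ℂ} (ha : ∀ n ≠ 0, ‖a n‖ ≤ 1) :
    AnalyticOnNhd ℂ (LSeries a) {s | 1 < s.re} := by
  refine (LSeries_analyticOnNhd a).mono fun s hs ↦ ?_
  have h1 : LSeries.abscissaOfAbsConv a ≤ 1 :=
    LSeries.abscissaOfAbsConv_le_of_le_const ⟨1, ha⟩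
  exact h1.trans_lt (by exact_mod_cast hs)

lemma analyticOnNhd_epsteinTwist {a : ℕ → ℂ} (ha : ∀ n ≠ 0, ‖a n‖ ≤ 1) :
    AnalyticOnNhd ℂ (epsteinTwist χ a) {s | 1 < s.re} := by
  have hshift : ∀ {b : ℕ → ℂ}, (∀ n ≠ 0, ‖b n‖ ≤ 1) →
      AnalyticOnNhd ℂ (fun s ↦ LSeries b (s + 2)) {s | 1 < s.re} := fun hb ↦
    (analyticOnNhd_LSeries hb).comp (g := LSeries _) (f := fun s ↦ s + 2)
      (fun s _ ↦ by fun_prop) fun s (hs : 1 < s.re) ↦ by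
        simp only [Set.mem_ofPred_eq, add_re, re_ofNat]; linarith
  have hb := norm_mul_character_le χ ha
  exact ((analyticOnNhd_LSeries hb).mul (hshift ha)).sub
    ((analyticOnNhd_const.mul (analyticOnNhd_LSeries ha)).mul (hshift hb))

lemma epsteinTwist_archTwist (t : ℝ) {s : ℂ} (hs : 1 < s.re) :
    epsteinTwist χ (archTwist t) s =
      riemannZeta (s + t * I + 2) * χ.LFunction (s + t * I) -
        4 * riemannZeta (s + t * I) * χ.LFunction (s + t * I + 2) := by
  have h1 : ∀ s, LSeries (archTwist t) s = LSeries 1 (s + t * I) := fun s ↦ by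
    simpa using LSeries_mul_archTwist 1 t s
  have hs1 : 1 < (s + t * I).re := by simpa using hs
  have hs2 : 1 < (s + t * I + 2).re := by
    rw [add_re, re_ofNat]; linarith
  rw [epsteinTwist, h1, h1, LSeries_mul_archTwist, LSeries_mul_archTwist,
    show s + 2 + t * I = s + t * I + 2 by ring, LSeries_one_eq_riemannZeta hs1,
    LSeries_one_eq_riemannZeta hs2, χ.LFunction_eq_LSeries hs1, χ.LFunction_eq_LSeries hs2]
  ring

lemma norm_epsteinTwist_sub_le {a b : ℕ → ℂ} (ha : ∀ n ≠ 0, ‖a n‖ ≤ 1) (hb : ∀ n ≠ 0, ‖b n‖ ≤ 1)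
    {σ : ℝ} (hσ : 1 < σ) {s : ℂ} (hs : σ ≤ s.re) :
    ‖epsteinTwist χ a s - epsteinTwist χ b s‖ ≤
      10 * dirichletNorm σ 1 * dirichletNorm σ (a - b) := by
  have hbound : ∀ {c : ℕ → ℂ}, (∀ n ≠ 0, ‖c n‖ ≤ 1) → ∀ {z : ℂ}, σ ≤ z.re →
      ‖LSeries c z‖ ≤ dirichletNorm σ 1 := fun hc z hz ↦
    (norm_LSeries_le_dirichletNorm hσ hc hz).trans
      (dirichletNorm_mono (C := 1) hσ (by simp) (by simpa using hc))
  have hsub2 : ∀ n ≠ 0, ‖(a - b) n‖ ≤ 2 := fun n hn ↦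
    (norm_sub_le _ _).trans (by linarith [ha n hn, hb n hn])
  have hsum : ∀ {c : ℕ → ℂ}, (∀ n ≠ 0, ‖c n‖ ≤ 1) → ∀ {z : ℂ}, σ ≤ z.re →
      LSeriesSummable c z := fun hc z hz ↦
    LSeriesSummable_of_bounded_of_one_lt_re hc (hσ.trans_le hz)
  have hdiff : ∀ {z : ℂ}, σ ≤ z.re →
      ‖LSeries a z - LSeries b z‖ ≤ dirichletNorm σ (a - b) := fun {z} hz ↦ by
    rw [← LSeries_sub (hsum ha hz) (hsum hb hz)]
    exact norm_LSeries_le_dirichletNorm hσ hsub2 hz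
  have haχ := norm_mul_character_le χ ha
  have hbχ := norm_mul_character_le χ hb
  have hdiffχ : ∀ {z : ℂ}, σ ≤ z.re → ‖LSeries (fun n ↦ a n * χ n) z -
      LSeries (fun n ↦ b n * χ n) z‖ ≤ dirichletNorm σ (a - b) := fun {z} hz ↦ by
    rw [← LSeries_sub (hsum haχ hz) (hsum hbχ hz)]
    have : (fun n ↦ a n * χ n) - (fun n : ℕ ↦ b n * χ n) = fun n : ℕ ↦ (a - b) n * χ n := by
      ext n; simp [sub_mul]
    rw [this]
    refine (norm_LSeries_le_dirichletNorm hσ (norm_mul_character_le χ hsub2) hz).trans ?_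
    refine dirichletNorm_mono hσ hsub2 fun n hn ↦ ?_
    rw [norm_mul]
    exact mul_le_of_le_one_right (norm_nonneg _) (χ.norm_le_one _)
  have hs2 : σ ≤ (s + 2).re := by rw [add_re, re_ofNat]; linarith
  have hprod : ∀ {x y x' y' : ℂ} {Z E : ℝ}, ‖y‖ ≤ Z → ‖x'‖ ≤ Z → ‖x - x'‖ ≤ E → ‖y - y'‖ ≤ E →
      ‖x * y - x' * y'‖ ≤ 2 * Z * E := by
    intro x y x' y' Z E hy hx' hx hyy
    have hE : 0 ≤ E := (norm_nonneg _).trans hx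
    have hZ : 0 ≤ Z := (norm_nonneg _).trans hy
    rw [show x * y - x' * y' = (x - x') * y + x' * (y - y') by ring]
    refine (norm_add_le _ _).trans ?_
    rw [norm_mul, norm_mul]
    have h1 : ‖x - x'‖ * ‖y‖ ≤ E * Z := by gcongr
    have h2 : ‖x'‖ * ‖y - y'‖ ≤ Z * E := by gcongr
    linarith
  have hA := hprod (hbound ha hs2) (hbound hbχ hs) (hdiffχ hs) (hdiff hs2)
  have hB := hprod (hbound haχ hs2) (hbound hb hs) (hdiff hs) (hdiffχ hs2)
  rw [epsteinTwist, epsteinTwist]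
  calc _ = ‖(LSeries (fun n ↦ a n * χ n) s * LSeries a (s + 2) -
        LSeries (fun n ↦ b n * χ n) s * LSeries b (s + 2)) -
        4 * (LSeries a s * LSeries (fun n ↦ a n * χ n) (s + 2) -
          LSeries b s * LSeries (fun n ↦ b n * χ n) (s + 2))‖ := by congr 1; ring
    _ ≤ _ := norm_sub_le _ _
    _ ≤ _ := by
      rw [norm_mul, show ‖(4 : ℂ)‖ = 4 by simp]
      linarith

lemma isPreconnected_one_lt_re : IsPreconnected {s : ℂ | 1 < s.re} :=
  (convex_halfSpace_re_gt 1).isPreconnected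

lemma isOpen_one_lt_re : IsOpen {s : ℂ | 1 < s.re} := isOpen_lt continuous_const continuous_re

/-- A zero of a function `f` that is not identically zero persists under small perturbations. -/
lemma exists_zero_of_norm_sub_lt {U : Set ℂ} (hU : IsOpen U) (hUc : IsPreconnected U) {f : ℂ → ℂ}
    (hf : AnalyticOnNhd ℂ f U) {z₀ z₁ : ℂ} (hz₀ : z₀ ∈ U) (hz₁ : z₁ ∈ U) (h₀ : f z₀ = 0)
    (h₁ : f z₁ ≠ 0) {ρ : ℝ} (hρ : 0 < ρ) :
    ∃ r m : ℝ, 0 < r ∧ r < ρ ∧ 0 < m ∧ Metric.closedBall z₀ r ⊆ U ∧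
      ∀ g : ℂ → ℂ, AnalyticOnNhd ℂ g U → (∀ z ∈ Metric.closedBall z₀ r, ‖g z - f z‖ < m) →
        ∃ z ∈ Metric.closedBall z₀ r, g z = 0 := by
  have hne : ∀ᶠ z in 𝓝[≠] z₀, f z ≠ 0 := by
    refine (hf z₀ hz₀).eventually_eq_zero_or_eventually_ne_zero.resolve_left fun h ↦ h₁ ?_
    exact hf.eqOn_zero_of_preconnected_of_eventuallyEq_zero hUc hz₀ h hz₁
  obtain ⟨r₁, hr₁, hball⟩ := Metric.mem_nhds_iff.mp
    (inter_mem (eventually_nhdsWithin_iff.mp hne) (hU.mem_nhds hz₀))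
  obtain ⟨r, hr, hr'⟩ := exists_between (lt_min hr₁ hρ)
  have hsub : Metric.closedBall z₀ r ⊆ Metric.ball z₀ r₁ :=
    Metric.closedBall_subset_ball (hr'.trans_le (min_le_left _ _))
  have hsubU : Metric.closedBall z₀ r ⊆ U := fun z hz ↦ (hball (hsub hz)).2
  have hsphere : Metric.sphere z₀ r ⊆ Metric.closedBall z₀ r := Metric.sphere_subset_closedBall
  obtain ⟨w, hw, hmin⟩ := (isCompact_sphere z₀ r).exists_isMinOn
    (NormedSpace.sphere_nonempty.mpr hr.le)
    (hf.continuousOn.mono (hsphere.trans hsubU)).norm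
  have hwpos : 0 < ‖f w‖ := norm_pos_iff.mpr <| (hball (hsub (hsphere hw))).1 <| by
    rintro rfl
    rw [Metric.mem_sphere, dist_self] at hw
    exact hr.ne hw
  refine ⟨r, ‖f w‖ / 4, hr, hr'.trans_le (min_le_right _ _), by positivity, hsubU,
    fun g hg hgf ↦ ?_⟩
  have hcenter : ‖g z₀‖ < ‖f w‖ / 4 := by
    simpa [h₀] using hgf z₀ (Metric.mem_closedBall_self hr.le)
  have hbd : ∀ z ∈ Metric.sphere z₀ r, ‖f w‖ / 2 ≤ ‖g z - g z₀‖ := by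
    intro z hz
    have h1 := hgf z (hsphere hz)
    have h2 : ‖f w‖ ≤ ‖f z‖ := hmin hz
    have h3 := norm_sub_norm_le (f z) (f z - g z)
    rw [sub_sub_cancel, norm_sub_rev] at h3
    have h4 := norm_sub_norm_le (g z) (g z₀)
    linarith
  have hdiff : DiffContOnCl ℂ g (Metric.ball z₀ r) :=
    (hg.differentiableOn.mono hsubU).diffContOnCl_ball subset_rfl
  have hfreq : ∃ᶠ z in 𝓝 z₀, g z ≠ g z₀ := by
    intro hcon
    have hconst := hg.eqOn_of_preconnected_of_eventuallyEq (analyticOnNhd_const (v := g z₀)) hUc hz₀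
      (by filter_upwards [hcon] with z hz using not_not.mp hz)
    have := hbd w hw
    rw [hconst (hsubU (hsphere hw)), sub_self, norm_zero] at this
    linarith
  have h0 : (0 : ℂ) ∈ Metric.ball (g z₀) (‖f w‖ / 2 / 2) := by
    rw [mem_ball_iff_norm, zero_sub, norm_neg]; linarith
  obtain ⟨z, hz, hz0⟩ := hdiff.ball_subset_image_closedBall hr hbd hfreq h0
  exact ⟨z, hz, hz0⟩

lemma exists_zero_near {δ : ℝ} {f : ℕ →*₀ ℂ} (hf : ∀ n ≠ 0, ‖f n‖ = 1)
    {σ₀ : ℝ} (hσ₀ : 1 < σ₀) (hσ₀δ : σ₀ < 1 + δ) (h₀ : epsteinTwist χ f σ₀ = 0)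
    {z₁ : ℂ} (hz₁ : 1 < z₁.re) (h₁ : epsteinTwist χ f z₁ ≠ 0) :
    ∃ R : ℝ, 0 < R ∧ ∀ x : ℝ, ∃ s : ℂ, 3 < s.re ∧ s.re < 3 + δ ∧ |s.im - x| ≤ R ∧
      riemannZeta s * χ.LFunction (s - 2) - 4 * riemannZeta (s - 2) * χ.LFunction s = 0 := by
  have hf' : ∀ n ≠ 0, ‖f n‖ ≤ 1 := fun n hn ↦ (hf n hn).le
  obtain ⟨r, m, hr, hrρ, hm, hsub, hpert⟩ := exists_zero_of_norm_sub_lt isOpen_one_lt_re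
    isPreconnected_one_lt_re (analyticOnNhd_epsteinTwist χ hf') (z₀ := σ₀)
    (by simpa using hσ₀) hz₁ h₀ h₁ (ρ := min (σ₀ - 1) (1 + δ - σ₀))
    (lt_min (by linarith) (by linarith))
  obtain ⟨hr1, hr2⟩ := lt_min_iff.mp hrρ
  have hσ : 1 < σ₀ - r := by linarith
  have hball : ∀ z ∈ Metric.closedBall (σ₀ : ℂ) r, |z.re - σ₀| ≤ r ∧ |z.im| ≤ r := by
    intro z hz
    rw [mem_closedBall_iff_norm] at hz
    exact ⟨by simpa using (abs_re_le_norm _).trans hz, by simpa using (abs_im_le_norm _).trans hz⟩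
  have hZ := dirichletNorm_nonneg (σ₀ - r) 1
  obtain ⟨R, hR, ht⟩ := exists_mem_Icc_dirichletNorm_archTwist_sub_lt hf hσ
    (ε := m / (10 * dirichletNorm (σ₀ - r) 1 + 1)) (by positivity)
  refine ⟨R + r, by positivity, fun x ↦ ?_⟩
  obtain ⟨t, htx, hlt⟩ := ht x
  have ha : ∀ n ≠ 0, ‖archTwist t n‖ ≤ 1 := fun n hn ↦ (norm_archTwist t hn).le
  obtain ⟨z, hz, hz0⟩ := hpert _ (analyticOnNhd_epsteinTwist χ ha) fun z hz ↦ by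
    have hzre : σ₀ - r ≤ z.re := by linarith [(abs_le.mp (hball z hz).1).1]
    refine (norm_epsteinTwist_sub_le χ ha hf' hσ hzre).trans_lt ?_
    rw [lt_div_iff₀ (by positivity)] at hlt
    nlinarith [dirichletNorm_nonneg (σ₀ - r) (archTwist t - f)]
  obtain ⟨hre, him⟩ := hball z hz
  rw [epsteinTwist_archTwist χ t (hsub hz)] at hz0
  rw [abs_le] at hre him
  refine ⟨z + t * I + 2, ?_, ?_, ?_, ?_⟩
  · simp; linarith
  · simp; linarith
  · rw [abs_le]
    simp only [add_im, mul_im, ofReal_re, I_im, mul_one, ofReal_im, I_re, mul_zero, add_zero,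
      im_ofNat]
    constructor <;> linarith [htx.1, htx.2]
  · rwa [add_sub_cancel_right]

end TwistedEpstein

lemma exists_injective_seq {S : Set ℂ} {R : ℝ} (hR : 0 < R)
    (hS : ∀ x : ℝ, ∃ s ∈ S, |s.im - x| ≤ R) :
    ∃ z : ℕ → ℂ, Function.Injective z ∧
      ∀ k, z k ∈ S ∧ 0 ≤ (z k).im ∧ (z k).im ≤ 3 * R * (k + 1) := by
  choose z hzS hz using fun k : ℕ ↦ hS ((3 * k + 1) * R)
  have hlow : ∀ k : ℕ, 3 * R * k ≤ (z k).im := fun k ↦ by linarith [(abs_le.mp (hz k)).1]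
  have hup : ∀ k : ℕ, (z k).im < 3 * R * (k + 1) := fun k ↦ by linarith [(abs_le.mp (hz k)).2]
  have hmono : StrictMono fun k ↦ (z k).im := strictMono_nat_of_lt_succ fun k ↦ by
    have := hlow (k + 1)
    push_cast at this
    linarith [hup k]
  exact ⟨z, fun j k h ↦ hmono.injective (congrArg im h),
    fun k ↦ ⟨hzS k, (by positivity : 0 ≤ 3 * R * k).trans (hlow k), (hup k).le⟩⟩

lemma atLeastCard_of_forall_exists {S : Set ℂ} {R : ℝ} (hR : 0 < R)
    (hS : ∀ x : ℝ, ∃ s ∈ S, |s.im - x| ≤ R) {T : ℝ} (hT : 6 * R ≤ T) :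
    AtLeastCard {s ∈ S | s.im ∈ Set.Icc 0 T} (1 / (6 * R) * T) := by
  classical
  have hT0 : 0 ≤ T := by linarith
  obtain ⟨z, hinj, hz⟩ := exists_injective_seq hR hS
  refine ⟨(Finset.range ⌊T / (3 * R)⌋₊).image z, ?_, ?_⟩
  · intro s hs
    obtain ⟨k, hk, rfl⟩ := Finset.mem_image.mp (Finset.mem_coe.mp hs)
    refine ⟨(hz k).1, (hz k).2.1, (hz k).2.2.trans ?_⟩
    have h1 : ((k + 1 : ℕ) : ℝ) ≤ T / (3 * R) :=
      (Nat.le_floor_iff (by positivity)).mp (Finset.mem_range.mp hk)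
    rw [le_div_iff₀ (by positivity)] at h1
    push_cast at h1
    linarith
  · rw [Finset.card_image_of_injective _ hinj, Finset.card_range]
    have h1 := Nat.lt_floor_add_one (T / (3 * R))
    have h2 : 1 ≤ T / (6 * R) := by rwa [one_le_div (by positivity)]
    have h3 : T / (3 * R) = 2 * (T / (6 * R)) := by field_simp; ring
    have h4 : 1 / (6 * R) * T = T / (6 * R) := by ring
    linarith

lemma character_four_eq (χ : DirichletCharacter ℂ 4) (n : ℕ) :
    χ n = 0 ∨ χ n = 1 ∨ χ n = -1 := by
  by_cases h : IsUnit (n : ZMod 4)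
  · right
    have hsq : (n : ZMod 4) ^ 2 = 1 := by
      have : ∀ x : ZMod 4, IsUnit x → x ^ 2 = 1 := by decide
      exact this _ h
    rw [← sq_eq_one_iff, ← map_pow, hsq, map_one]
  · exact Or.inl (χ.map_nonunit h)

lemma character_four_sq_of_odd (χ : DirichletCharacter ℂ 4) {n : ℕ} (hn : Odd n) :
    χ n * χ n = 1 := by
  have hu : IsUnit (n : ZMod 4) := by
    rw [ZMod.isUnit_iff_coprime]
    exact (Nat.coprime_two_right.mpr hn).pow_right 2
  have h0 : χ n ≠ 0 := (hu.map χ).ne_zero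
  rcases character_four_eq χ n with h | h | h
  · exact absurd h h0
  · rw [h]; norm_num
  · rw [h]; norm_num

/-- The completely multiplicative function with prescribed values at the primes. -/
noncomputable def completelyMultiplicative (e : ℕ → ℂ) : ℕ →*₀ ℂ where
  toFun n := if n = 0 then 0 else (n.primeFactorsList.map e).prod
  map_zero' := by simp
  map_one' := by simp
  map_mul' m n := by
    rcases eq_or_ne m 0 with rfl | hm
    · simp
    rcases eq_or_ne n 0 with rfl | hn
    · simp
    simp only [hm, hn, mul_eq_zero, or_self, if_false]
    rw [((Nat.perm_primeFactorsList_mul hm hn).map e).prod_eq, List.map_append, List.prod_append]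

lemma completelyMultiplicative_prime (e : ℕ → ℂ) {p : ℕ} (hp : p.Prime) :
    completelyMultiplicative e p = e p := by
  change (if p = 0 then 0 else (p.primeFactorsList.map e).prod) = e p
  simp [hp.ne_zero, Nat.primeFactorsList_prime hp]

/-- Two completely multiplicative functions agreeing at all but finitely many primes have
Dirichlet series differing by finitely many Euler factors. -/
lemma LSeries_mul_prod_eq {g h : ℕ →*₀ ℂ} (hg : ∀ n ≠ 0, ‖g n‖ ≤ 1) (hh : ∀ n ≠ 0, ‖h n‖ ≤ 1)
    (S : Finset Nat.Primes) (hgh : ∀ p ∉ S, g p = h p) {s : ℂ} (hs : 1 < s.re) :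
    LSeries g s * ∏ p ∈ S, (1 - g p * (p : ℂ) ^ (-s)) =
      LSeries h s * ∏ p ∈ S, (1 - h p * (p : ℂ) ^ (-s)) := by
  classical
  have hs0 : -s ≠ 0 := by
    rintro h
    rw [neg_eq_zero.mp h, zero_re] at hs
    linarith
  have key : ∀ k : ℕ →*₀ ℂ, (∀ n ≠ 0, ‖k n‖ ≤ 1) →
      HasProd (fun p : Nat.Primes ↦ if p ∈ S then 1 else (1 - k p * (p : ℂ) ^ (-s))⁻¹)
        (LSeries k s * ∏ p ∈ S, (1 - k p * (p : ℂ) ^ (-s))) := by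
    intro k hk
    have hterm : ∀ n, LSeries.term k s n = k n * (n : ℂ) ^ (-s) := by
      intro n
      rcases eq_or_ne n 0 with rfl | hn
      · simp
      · rw [LSeries.term_of_ne_zero hn, cpow_neg, div_eq_mul_inv]
    let F : ℕ →*₀ ℂ :=
      { toFun := fun n ↦ k n * (n : ℂ) ^ (-s)
        map_zero' := by simp
        map_one' := by simp
        map_mul' := fun m n ↦ by
          rw [map_mul, Nat.cast_mul, natCast_mul_natCast_cpow]; ring }
    have hsum : Summable (fun n ↦ ‖F n‖) := by
      have := (LSeriesSummable_of_bounded_of_one_lt_re hk hs).norm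
      exact this.congr fun n ↦ by rw [hterm]; rfl
    have hF : LSeries k s = ∑' n, F n := tsum_congr hterm
    have h1 := EulerProduct.eulerProduct_completely_multiplicative_hasProd hsum
    rw [← hF] at h1
    have h2 : HasProd (fun p : Nat.Primes ↦ if p ∈ S then 1 - F p else 1)
        (∏ p ∈ S, if p ∈ S then 1 - F p else 1) :=
      hasProd_prod_of_ne_finset_one fun p hp ↦ if_neg hp
    have h3 := h1.mul h2
    rw [Finset.prod_congr rfl fun p hp ↦ if_pos hp] at h3
    refine h3.congr_fun fun p ↦ ?_
    by_cases hp : p ∈ S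
    · have hne : 1 - F p ≠ 0 := by
        intro h0
        have hlt := Summable.norm_lt_one (f := F.toMonoidHom) hsum.of_norm p.prop.one_lt
        have hFp : F p = 1 := (sub_eq_zero.mp h0).symm
        change ‖F p‖ < 1 at hlt
        rw [hFp, norm_one] at hlt
        exact lt_irrefl _ hlt
      simp [hp, hne]
    · simp [hp, F]
  refine (key g hg).unique ?_
  have : (fun p : Nat.Primes ↦ if p ∈ S then 1 else (1 - g p * (p : ℂ) ^ (-s))⁻¹) =
      fun p : Nat.Primes ↦ if p ∈ S then 1 else (1 - h p * (p : ℂ) ^ (-s))⁻¹ := by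
    ext p
    split_ifs with hp
    · rfl
    · rw [hgh p hp]
  rw [this]
  exact key h hh

lemma norm_LSeries_sub_one_le {a : ℕ → ℂ} (ha : ∀ n ≠ 0, ‖a n‖ ≤ 1) (ha1 : a 1 = 1) {s : ℂ}
    (hs : 3 ≤ s.re) : ‖LSeries a s - 1‖ ≤ 1 / 3 := by
  have hsum : HasSum (LSeries.term a s) (LSeries a s) :=
    (LSeriesSummable_of_bounded_of_one_lt_re ha (by linarith)).LSeriesHasSum
  have hone : ∀ (c : ℝ), HasSum (fun n : ℕ ↦ if n = 1 then c else 0) c := fun c ↦ by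
    simpa using hasSum_ite_eq (1 : ℕ) c
  have hdiff := hsum.sub (by simpa using hasSum_ite_eq (1 : ℕ) (1 : ℂ))
  have hbd := (hasSum_zeta_two.sub (hone 1)).mul_left (1 / 2 : ℝ)
  rw [← hdiff.tsum_eq]
  refine (tsum_of_norm_bounded hbd fun n ↦ ?_).trans ?_
  · rcases eq_or_ne n 0 with rfl | hn
    · simp
    rcases eq_or_ne n 1 with rfl | hn1
    · simp [ha1]
    have hn2 : (2 : ℝ) ≤ n := by exact_mod_cast (by omega : 2 ≤ n)
    rw [if_neg hn1, if_neg hn1, sub_zero, sub_zero, LSeries.norm_term_eq, if_neg hn]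
    have h3 : (n : ℝ) ^ (3 : ℕ) ≤ (n : ℝ) ^ s.re := by
      rw [← Real.rpow_natCast]
      exact Real.rpow_le_rpow_of_exponent_le (by linarith) (by exact_mod_cast hs)
    calc ‖a n‖ / (n : ℝ) ^ s.re ≤ 1 / (n : ℝ) ^ 3 := by
          gcongr
          exact ha n hn
      _ ≤ 1 / (2 * (n : ℝ) ^ 2) := by
          gcongr
          nlinarith
      _ = 1 / 2 * (1 / (n : ℝ) ^ 2) := by ring
  · have := Real.pi_lt_d2
    have := Real.pi_pos
    nlinarith

lemma conj_LSeries_ofReal {a : ℕ → ℂ} (ha : ∀ n, (starRingEnd ℂ) (a n) = a n) (σ : ℝ) :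
    (starRingEnd ℂ) (LSeries a σ) = LSeries a σ := by
  have h : (starRingEnd ℂ) (LSeries a σ) = ∑' n, (starRingEnd ℂ) (LSeries.term a σ n) :=
    Complex.conjCLE.map_tsum
  rw [h]
  refine tsum_congr fun n ↦ ?_
  rcases eq_or_ne n 0 with rfl | hn
  · simp
  · rw [LSeries.term_of_ne_zero hn, map_div₀, ha, ← ofReal_natCast,
      ← ofReal_cpow (Nat.cast_nonneg n), conj_ofReal]

lemma epsteinTwist_one_re_neg (χ : DirichletCharacter ℂ 4) {σ : ℝ} (hσ : 1 < σ) :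
    (epsteinTwist χ 1 σ).re < 0 := by
  have hone : ∀ n ≠ 0, ‖(1 : ℕ → ℂ) n‖ ≤ 1 := by simp
  have hχ : ∀ n ≠ 0, ‖(1 : ℕ → ℂ) n * χ n‖ ≤ 1 := norm_mul_character_le χ hone
  set Z := dirichletNorm σ 1 with hZ
  have hζ : LSeries 1 (σ : ℂ) = Z := by
    rw [hZ, dirichletNorm, ofReal_tsum]
    refine tsum_congr fun n ↦ ?_
    rcases eq_or_ne n 0 with rfl | hn
    · simp [Real.zero_rpow (by linarith : -σ ≠ 0)]
    · rw [LSeries.term_of_ne_zero hn, Real.rpow_neg (by positivity), ofReal_mul, ofReal_inv,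
        ofReal_cpow (by positivity)]
      simp
  have hZpos : 0 < Z := by
    refine (summable_dirichletNorm hσ hone).tsum_pos (fun n ↦ by positivity) 1 (by simp)
  have h3 : 3 ≤ ((σ : ℂ) + 2).re := by
    rw [add_re, ofReal_re, re_ofNat]; linarith
  have hA : ‖LSeries (fun n ↦ (1 : ℕ → ℂ) n * χ n) σ‖ ≤ Z :=
    (norm_LSeries_le_dirichletNorm hσ hχ (by simp)).trans
      (dirichletNorm_mono hσ hone (by simpa using hχ))
  have hB := norm_LSeries_sub_one_le hone rfl h3
  have hC := norm_LSeries_sub_one_le hχ (by simp) h3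
  have hB' : ‖LSeries 1 ((σ : ℂ) + 2)‖ ≤ 4 / 3 := by
    have := norm_sub_norm_le (LSeries 1 ((σ : ℂ) + 2)) 1
    rw [norm_one] at this
    linarith
  have hC' : 2 / 3 ≤ (LSeries (fun n ↦ (1 : ℕ → ℂ) n * χ n) ((σ : ℂ) + 2)).re := by
    have := (abs_le.mp ((abs_re_le_norm _).trans hC)).1
    rw [sub_re, one_re] at this
    linarith
  have hAB : (LSeries (fun n ↦ (1 : ℕ → ℂ) n * χ n) σ * LSeries 1 ((σ : ℂ) + 2)).re ≤
      Z * (4 / 3) := by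
    refine (re_le_norm _).trans ?_
    rw [norm_mul]
    gcongr
  rw [epsteinTwist, sub_re, hζ, mul_assoc, show (4 : ℂ) = ((4 : ℝ) : ℂ) by norm_num, re_ofReal_mul,
    re_ofReal_mul]
  nlinarith

section SignTwist

variable (χ : DirichletCharacter ℂ 4) (M : ℕ)

/-- The completely multiplicative function equal to `1` at the primes `p ≤ M` and to `χ p` at the
primes `p > M`. -/
noncomputable def signTwist : ℕ →*₀ ℂ := completelyMultiplicative fun p ↦ if p ≤ M then 1 else χ p

/-- The product of `f` with the character `χ`, as a completely multiplicative function. -/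
noncomputable def mulCharacter (f : ℕ →*₀ ℂ) : ℕ →*₀ ℂ where
  toFun n := f n * χ n
  map_zero' := by simp
  map_one' := by simp
  map_mul' m n := by rw [map_mul, Nat.cast_mul, map_mul]; ring

lemma completelyMultiplicative_one {n : ℕ} (hn : n ≠ 0) :
    completelyMultiplicative (fun _ ↦ 1) n = 1 := by
  change (if n = 0 then 0 else (n.primeFactorsList.map fun _ ↦ (1 : ℂ)).prod) = 1
  simp [hn]

variable {M}

lemma signTwist_eq (hM : 2 ≤ M) {n : ℕ} (hn : n ≠ 0) :
    signTwist χ M n = 1 ∨ signTwist χ M n = -1 := by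
  induction n using Nat.recOnMul with
  | zero => exact absurd rfl hn
  | one => simp
  | prime p hp =>
    rw [signTwist, completelyMultiplicative_prime _ hp]
    split_ifs with hpM
    · exact Or.inl rfl
    · exact mul_self_eq_one_iff.mp
        (character_four_sq_of_odd χ (hp.odd_of_ne_two (by omega)))
  | mul m n hm hn' =>
    rw [map_mul]
    rcases hm (left_ne_zero_of_mul hn) with h | h <;>
      rcases hn' (right_ne_zero_of_mul hn) with h' | h' <;> simp [h, h']

lemma signTwist_eq_one {n : ℕ} (hn : n ≠ 0) (hnM : n ≤ M) : signTwist χ M n = 1 := by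
  induction n using Nat.recOnMul with
  | zero => exact absurd rfl hn
  | one => simp
  | prime p hp => rw [signTwist, completelyMultiplicative_prime _ hp, if_pos hnM]
  | mul m n hm hn' =>
    have hm0 := left_ne_zero_of_mul hn
    have hn0 := right_ne_zero_of_mul hn
    rw [map_mul, hm hm0 ((Nat.le_mul_of_pos_right m (Nat.pos_of_ne_zero hn0)).trans hnM),
      hn' hn0 ((Nat.le_mul_of_pos_left n (Nat.pos_of_ne_zero hm0)).trans hnM), mul_one]

lemma norm_signTwist (hM : 2 ≤ M) {n : ℕ} (hn : n ≠ 0) : ‖signTwist χ M n‖ = 1 := by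
  rcases signTwist_eq χ hM hn with h | h <;> simp [h]

lemma mulCharacter_signTwist_eq (hM : 2 ≤ M) (n : ℕ) :
    mulCharacter χ (signTwist χ M) n = 0 ∨ mulCharacter χ (signTwist χ M) n = 1 ∨
      mulCharacter χ (signTwist χ M) n = -1 := by
  change signTwist χ M n * χ n = 0 ∨ signTwist χ M n * χ n = 1 ∨ signTwist χ M n * χ n = -1
  rcases eq_or_ne n 0 with rfl | hn
  · simp
  · rcases signTwist_eq χ hM hn with h | h <;>
      rcases character_four_eq χ n with h' | h' | h' <;> simp [h, h']

lemma norm_le_one_of_eq_zero_or_one_or_neg_one {z : ℂ} (hz : z = 0 ∨ z = 1 ∨ z = -1) :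
    ‖z‖ ≤ 1 := by
  rcases hz with rfl | rfl | rfl <;> simp

lemma conj_eq_of_eq_zero_or_one_or_neg_one {z : ℂ} (hz : z = 0 ∨ z = 1 ∨ z = -1) :
    (starRingEnd ℂ) z = z := by
  rcases hz with rfl | rfl | rfl <;> simp

lemma exists_pos_prod_one_sub_eq {k : ℕ → ℂ} (hk : ∀ n, k n = 0 ∨ k n = 1 ∨ k n = -1)
    (S : Finset Nat.Primes) :
    ∃ r : ℝ, 0 < r ∧ ∏ p ∈ S, (1 - k p * (p : ℂ) ^ (-(1 : ℂ))) = r := by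
  refine Finset.prod_induction _ (fun z : ℂ ↦ ∃ r : ℝ, 0 < r ∧ z = r) ?_ ⟨1, one_pos, by simp⟩
    fun p _ ↦ ?_
  · rintro _ _ ⟨x, hx, rfl⟩ ⟨y, hy, rfl⟩
    exact ⟨x * y, mul_pos hx hy, by push_cast; rfl⟩
  · have hp : (2 : ℝ) ≤ p := by exact_mod_cast p.prop.two_le
    have hinv : ((p : ℕ) : ℝ)⁻¹ < 1 := inv_lt_one_of_one_lt₀ (by linarith)
    have hinv0 : 0 < ((p : ℕ) : ℝ)⁻¹ := by positivity
    rw [cpow_neg_one]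
    rcases hk p with h | h | h
    · exact ⟨1, one_pos, by simp [h]⟩
    · exact ⟨1 - ((p : ℕ) : ℝ)⁻¹, by linarith, by simp [h]⟩
    · exact ⟨1 + ((p : ℕ) : ℝ)⁻¹, by linarith, by simp [h]⟩

lemma continuous_prod_one_sub (k : ℕ → ℂ) (S : Finset Nat.Primes) :
    Continuous fun s : ℂ ↦ ∏ p ∈ S, (1 - k p * (p : ℂ) ^ (-s)) := by
  refine continuous_finsetProd _ fun p _ ↦ continuous_const.sub (continuous_const.mul ?_)
  exact (continuous_neg).const_cpow (Or.inl (by exact_mod_cast p.prop.ne_zero))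

lemma tendsto_ofReal_nhdsGT_one : Tendsto (fun σ : ℝ ↦ (σ : ℂ)) (𝓝[>] 1) (𝓝[≠] 1) := by
  refine tendsto_nhdsWithin_iff.mpr ⟨?_, ?_⟩
  · have := (Complex.continuous_ofReal.tendsto 1).mono_left (nhdsWithin_le_nhds (s := Set.Ioi 1))
    simpa using this
  · filter_upwards [self_mem_nhdsWithin] with σ hσ
    rw [Set.mem_compl_singleton_iff]
    exact_mod_cast ne_of_gt hσ

/-- Up to finitely many Euler factors, twisting by `signTwist χ M` swaps `ζ` and `L(·, χ)`, so that
the pole of `ζ` now appears in the first summand of `epsteinTwist`. -/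
lemma tendsto_epsteinTwist_signTwist (hχ : χ ≠ 1) (hM : 2 ≤ M) :
    ∃ r : ℝ, 0 < r ∧ Tendsto (fun σ : ℝ ↦ ((σ : ℂ) - 1) * epsteinTwist χ (signTwist χ M) σ)
      (𝓝[>] 1) (𝓝 (r * LSeries (signTwist χ M) 3)) := by
  set f := signTwist χ M with hf
  set fχ := mulCharacter χ f with hfχ
  set u := completelyMultiplicative fun _ ↦ 1 with hu
  set X := mulCharacter χ u with hX
  set S : Finset Nat.Primes := (Finset.range (M + 1)).subtype Nat.Prime with hS
  have hfv : ∀ n, f n = 0 ∨ f n = 1 ∨ f n = -1 := fun n ↦ by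
    rcases eq_or_ne n 0 with rfl | hn
    · simp
    · exact Or.inr (signTwist_eq χ hM hn)
  have hfχv : ∀ n, fχ n = 0 ∨ fχ n = 1 ∨ fχ n = -1 := mulCharacter_signTwist_eq χ hM
  have huv : ∀ n, u n = 0 ∨ u n = 1 ∨ u n = -1 := fun n ↦ by
    rcases eq_or_ne n 0 with rfl | hn
    · simp
    · exact Or.inr (Or.inl (completelyMultiplicative_one hn))
  have hXu : ∀ n ≠ 0, X n = χ n := fun n hn ↦ by
    change u n * χ n = χ n
    rw [hu, completelyMultiplicative_one hn, one_mul]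
  have hXv : ∀ n, X n = 0 ∨ X n = 1 ∨ X n = -1 := fun n ↦ by
    rcases eq_or_ne n 0 with rfl | hn
    · simp
    · rw [hXu n hn]; exact character_four_eq χ n
  have hnorm : ∀ {k : ℕ →*₀ ℂ}, (∀ n, k n = 0 ∨ k n = 1 ∨ k n = -1) → ∀ n ≠ 0, ‖k n‖ ≤ 1 :=
    fun hk n _ ↦ norm_le_one_of_eq_zero_or_one_or_neg_one (hk n)
  have hlarge : ∀ p ∉ S, ¬((p : ℕ) ≤ M) := by
    intro p hp hpM
    exact hp (Finset.mem_subtype.mpr (Finset.mem_range.mpr (by omega)))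
  have hfp : ∀ p ∉ S, f p = χ p := fun p hp ↦ by
    rw [hf, signTwist, completelyMultiplicative_prime _ p.prop, if_neg (hlarge p hp)]
  have hfX : ∀ p ∉ S, f p = X p := fun p hp ↦ by rw [hfp p hp, hXu _ p.prop.ne_zero]
  have hfχu : ∀ p ∉ S, fχ p = u p := fun p hp ↦ by
    change f p * χ p = u p
    have hlt := hlarge p hp
    rw [hfp p hp, hu, completelyMultiplicative_one p.prop.ne_zero]
    exact character_four_sq_of_odd χ (p.prop.odd_of_ne_two (by omega))
  have hζ : ∀ s : ℂ, 1 < s.re → LSeries u s = riemannZeta s := fun s hs ↦ by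
    rw [← LSeries_one_eq_riemannZeta hs]
    exact LSeries_congr (fun hn ↦ completelyMultiplicative_one hn) s
  have hL : ∀ s : ℂ, 1 < s.re → LSeries X s = χ.LFunction s := fun s hs ↦ by
    rw [χ.LFunction_eq_LSeries hs]
    exact LSeries_congr (fun hn ↦ hXu _ hn) s
  have hprod : ∀ k : ℕ →*₀ ℂ, Tendsto (fun σ : ℝ ↦ ∏ p ∈ S, (1 - k p * (p : ℂ) ^ (-(σ : ℂ))))
      (𝓝[>] 1) (𝓝 (∏ p ∈ S, (1 - k p * (p : ℂ) ^ (-(1 : ℂ))))) := fun k ↦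
    ((continuous_prod_one_sub k S).tendsto 1).comp
      (tendsto_ofReal_nhdsGT_one.mono_right nhdsWithin_le_nhds)
  obtain ⟨rf, hrf, hrf'⟩ := exists_pos_prod_one_sub_eq hfv S
  obtain ⟨rχ, hrχ, hrχ'⟩ := exists_pos_prod_one_sub_eq hfχv S
  obtain ⟨ru, hru, hru'⟩ := exists_pos_prod_one_sub_eq huv S
  have hrf0 : (rf : ℂ) ≠ 0 := by exact_mod_cast hrf.ne'
  have hrχ0 : (rχ : ℂ) ≠ 0 := by exact_mod_cast hrχ.ne'
  have hPf := hprod f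
  have hPχ := hprod fχ
  have hPu := hprod u
  rw [hrf'] at hPf
  rw [hrχ'] at hPχ
  rw [hru'] at hPu
  have hpole : Tendsto (fun σ : ℝ ↦ ((σ : ℂ) - 1) * LSeries fχ σ) (𝓝[>] 1) (𝓝 (ru / rχ : ℂ)) := by
    have h1 := (riemannZeta_residue_one.comp tendsto_ofReal_nhdsGT_one).mul (hPu.div hPχ hrχ0)
    rw [one_mul] at h1
    refine h1.congr' ?_
    filter_upwards [self_mem_nhdsWithin, hPχ.eventually_ne hrχ0] with σ hσ hne
    have hσ' : 1 < (σ : ℂ).re := hσ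
    have h2 := LSeries_mul_prod_eq (hnorm hfχv) (hnorm huv) S hfχu hσ'
    rw [hζ _ hσ', ← eq_div_iff hne] at h2
    rw [h2, Function.comp_apply, Pi.div_apply]
    ring
  have hfin : Tendsto (fun σ : ℝ ↦ LSeries f σ) (𝓝[>] 1)
      (𝓝 (χ.LFunction 1 * ((∏ p ∈ S, (1 - X p * (p : ℂ) ^ (-(1 : ℂ)))) / rf))) := by
    have h1 := (((DirichletCharacter.differentiable_LFunction hχ).continuous.tendsto 1).comp
      (tendsto_ofReal_nhdsGT_one.mono_right nhdsWithin_le_nhds)).mul ((hprod X).div hPf hrf0)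
    refine h1.congr' ?_
    filter_upwards [self_mem_nhdsWithin, hPf.eventually_ne hrf0] with σ hσ hne
    have hσ' : 1 < (σ : ℂ).re := hσ
    have h2 := LSeries_mul_prod_eq (hnorm hfv) (hnorm hXv) S hfX hσ'
    rw [hL _ hσ', ← eq_div_iff hne] at h2
    rw [h2, Function.comp_apply, Pi.div_apply]
    ring
  have hshift : ∀ {k : ℕ →*₀ ℂ}, (∀ n, k n = 0 ∨ k n = 1 ∨ k n = -1) →
      Tendsto (fun σ : ℝ ↦ LSeries k (σ + 2)) (𝓝[>] 1) (𝓝 (LSeries k 3)) := fun {k} hk ↦ by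
    have h1 : ContinuousAt (LSeries k) 3 :=
      (analyticOnNhd_LSeries (hnorm hk) 3 (by simp)).continuousAt
    refine h1.tendsto.comp ?_
    have := (tendsto_ofReal_nhdsGT_one.mono_right nhdsWithin_le_nhds).add_const (2 : ℂ)
    rwa [show (1 : ℂ) + 2 = 3 by norm_num] at this
  have hzero : Tendsto (fun σ : ℝ ↦ (σ : ℂ) - 1) (𝓝[>] 1) (𝓝 0) := by
    simpa using (tendsto_ofReal_nhdsGT_one.mono_right nhdsWithin_le_nhds).sub_const (1 : ℂ)
  refine ⟨ru / rχ, by positivity, ?_⟩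
  have hmain := (hpole.mul (hshift hfv)).sub (((hzero.const_mul 4).mul hfin).mul (hshift hfχv))
  rw [mul_zero, zero_mul, zero_mul, sub_zero] at hmain
  push_cast
  refine hmain.congr fun σ ↦ ?_
  change _ = ((σ : ℂ) - 1) * (LSeries fχ σ * LSeries f (σ + 2) -
    4 * LSeries f σ * LSeries fχ (σ + 2))
  ring

lemma exists_epsteinTwist_re_pos (hχ : χ ≠ 1) (hM : 2 ≤ M) {σ₁ : ℝ} (hσ₁ : 1 < σ₁) :
    ∃ σ : ℝ, 1 < σ ∧ σ < σ₁ ∧ 0 < (epsteinTwist χ (signTwist χ M) σ).re := by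
  obtain ⟨r, hr, hlim⟩ := tendsto_epsteinTwist_signTwist χ hχ hM
  have hre := (continuous_re.tendsto _).comp hlim
  have hpos : 0 < (r * LSeries (signTwist χ M) 3 : ℂ).re := by
    rw [re_ofReal_mul]
    refine mul_pos hr ?_
    have h := norm_LSeries_sub_one_le (fun n hn ↦ (norm_signTwist χ hM hn).le)
      (map_one (signTwist χ M)) (s := 3) (by simp)
    have := (abs_le.mp ((abs_re_le_norm _).trans h)).1
    rw [sub_re, one_re] at this
    linarith
  obtain ⟨σ, hσ, hσ1, hσ2⟩ := ((hre.eventually_const_lt hpos).and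
    (Ioo_mem_nhdsGT hσ₁)).exists
  refine ⟨σ, hσ1, hσ2, ?_⟩
  rw [Function.comp_apply, show (σ : ℂ) - 1 = ((σ - 1 : ℝ) : ℂ) by push_cast; rfl,
    re_ofReal_mul] at hσ
  exact pos_of_mul_pos_right hσ (by linarith)

lemma exists_epsteinTwist_re_neg {σ₁ : ℝ} (hσ₁ : 1 < σ₁) :
    ∃ M : ℕ, 2 ≤ M ∧ (epsteinTwist χ (signTwist χ M) σ₁).re < 0 := by
  have hneg := epsteinTwist_one_re_neg χ hσ₁
  have hnorm : ∀ k : ℕ, ∀ n ≠ 0, ‖signTwist χ (k + 2) n‖ ≤ 1 := fun k n hn ↦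
    (norm_signTwist χ (by omega) hn).le
  have hlim := tendsto_dirichletNorm_zero (C := 2) hσ₁ (a := fun k ↦ signTwist χ (k + 2) - 1)
    (fun k n hn ↦ (norm_sub_le _ _).trans (by
      have := hnorm k n hn
      simp only [Pi.one_apply, norm_one]; linarith))
    (fun n hn ↦ by
      refine (tendsto_congr' ?_).mpr tendsto_const_nhds
      filter_upwards [eventually_ge_atTop n] with k hk
      simp [signTwist_eq_one χ hn (by omega : n ≤ k + 2)])
  have hlim' := hlim.const_mul (10 * dirichletNorm σ₁ 1)
  rw [mul_zero] at hlim'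
  obtain ⟨k, hk⟩ := (hlim'.eventually_lt_const (neg_pos.mpr hneg)).exists
  refine ⟨k + 2, by omega, ?_⟩
  have h := norm_epsteinTwist_sub_le χ (hnorm k) (b := 1) (by simp) hσ₁ (s := σ₁) (by simp)
  have := (re_le_norm _).trans h
  rw [sub_re] at this
  linarith

lemma epsteinTwist_signTwist_im (hM : 2 ≤ M) (σ : ℝ) :
    (epsteinTwist χ (signTwist χ M) σ).im = 0 := by
  rw [← conj_eq_iff_im]
  have hf : ∀ n, (starRingEnd ℂ) (signTwist χ M n) = signTwist χ M n := fun n ↦ by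
    rcases eq_or_ne n 0 with rfl | hn
    · simp
    · exact conj_eq_of_eq_zero_or_one_or_neg_one (Or.inr (signTwist_eq χ hM hn))
  have hfχ : ∀ n : ℕ, (starRingEnd ℂ) (signTwist χ M n * χ n) = signTwist χ M n * χ n := fun n ↦
    conj_eq_of_eq_zero_or_one_or_neg_one (mulCharacter_signTwist_eq χ hM n)
  have h2 : (σ : ℂ) + 2 = ((σ + 2 : ℝ) : ℂ) := by push_cast; rfl
  rw [epsteinTwist, h2, map_sub, map_mul, map_mul, map_mul, conj_LSeries_ofReal hf,
    conj_LSeries_ofReal hf, conj_LSeries_ofReal hfχ, conj_LSeries_ofReal hfχ, map_ofNat]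

end SignTwist

lemma exists_twisted_zero {χ : DirichletCharacter ℂ 4} (hχ : χ ≠ 1) {δ : ℝ} (hδ : 0 < δ) :
    ∃ f : ℕ →*₀ ℂ, (∀ n ≠ 0, ‖f n‖ = 1) ∧ ∃ σ₀ : ℝ, 1 < σ₀ ∧ σ₀ < 1 + δ ∧
      epsteinTwist χ f σ₀ = 0 ∧ ∃ z₁ : ℂ, 1 < z₁.re ∧ epsteinTwist χ f z₁ ≠ 0 := by
  obtain ⟨M, hM, hneg⟩ := exists_epsteinTwist_re_neg χ (σ₁ := 1 + δ / 2) (by linarith)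
  obtain ⟨σ₂, h1, h2, hpos⟩ := exists_epsteinTwist_re_pos χ hχ hM (σ₁ := 1 + δ / 2) (by linarith)
  have hcont : ContinuousOn (fun σ : ℝ ↦ (epsteinTwist χ (signTwist χ M) σ).re)
      (Set.Icc σ₂ (1 + δ / 2)) := by
    refine continuous_re.comp_continuousOn ?_
    refine (analyticOnNhd_epsteinTwist χ fun n hn ↦ (norm_signTwist χ hM hn).le).continuousOn.comp
      Complex.continuous_ofReal.continuousOn fun σ hσ ↦ ?_
    exact h1.trans_le (by simpa using hσ.1)
  obtain ⟨σ₀, hσ₀, hzero⟩ := intermediate_value_Icc' h2.le hcont ⟨hneg.le, hpos.le⟩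
  refine ⟨signTwist χ M, fun n hn ↦ norm_signTwist χ hM hn, σ₀, h1.trans_le hσ₀.1,
    hσ₀.2.trans_lt (by linarith), Complex.ext hzero (epsteinTwist_signTwist_im χ hM σ₀),
    ((1 + δ / 2 : ℝ) : ℂ), by rw [ofReal_re]; linarith, fun h ↦ ?_⟩
  rw [h, zero_re] at hneg
  exact lt_irrefl _ hneg

/-- Let `χ₋₄` be the (unique) nontrivial Dirichlet character mod 4 and
`L(·, χ₋₄)` its `L`-function. For every `δ > 0` the function
`ζ(s) L(s-2, χ₋₄) - 4 ζ(s-2) L(s, χ₋₄)` has at least `cT` zeros in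
`{3 < Re s < 3+δ, Im s ∈ [0,T]}`; in particular the Epstein zeta function
`ζ(s; I₆) = -4 (ζ(s) L(s-2, χ₋₄) - 4 ζ(s-2) L(s, χ₋₄))` has infinitely many zeros in the
half-plane `Re s > 3`. -/
theorem statement_16 (χ : DirichletCharacter ℂ 4) (hχ : χ ≠ 1) (δ : ℝ) (hδ : 0 < δ) :
    (∃ c : ℝ, 0 < c ∧ ∃ T₀ : ℝ, 0 < T₀ ∧ ∀ T : ℝ, T₀ ≤ T →
      AtLeastCard {s : ℂ | 3 < s.re ∧ s.re < 3 + δ ∧ s.im ∈ Set.Icc 0 T ∧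
        riemannZeta s * DirichletCharacter.LFunction χ (s - 2) -
          4 * riemannZeta (s - 2) * DirichletCharacter.LFunction χ s = 0} (c * T)) ∧
    {s : ℂ | 3 < s.re ∧
      -4 * (riemannZeta s * DirichletCharacter.LFunction χ (s - 2) -
        4 * riemannZeta (s - 2) * DirichletCharacter.LFunction χ s) = 0}.Infinite := by
  obtain ⟨f, hf, σ₀, hσ₀, hσ₀δ, h₀, z₁, hz₁, h₁⟩ := exists_twisted_zero hχ hδ
  obtain ⟨R, hR, hzero⟩ := exists_zero_near χ hf hσ₀ hσ₀δ h₀ hz₁ h₁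
  set S : Set ℂ := {s | 3 < s.re ∧ s.re < 3 + δ ∧ riemannZeta s * χ.LFunction (s - 2) -
    4 * riemannZeta (s - 2) * χ.LFunction s = 0}
  have hS : ∀ x : ℝ, ∃ s ∈ S, |s.im - x| ≤ R := fun x ↦ by
    obtain ⟨s, hs1, hs2, hs3, hs4⟩ := hzero x
    exact ⟨s, ⟨hs1, hs2, hs4⟩, hs3⟩
  refine ⟨⟨1 / (6 * R), by positivity, 6 * R, by positivity, fun T hT ↦ ?_⟩, ?_⟩
  · obtain ⟨F, hF, hcard⟩ := atLeastCard_of_forall_exists hR hS hT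
    exact ⟨F, fun s hs ↦ ⟨(hF hs).1.1, (hF hs).1.2.1, (hF hs).2, (hF hs).1.2.2⟩, hcard⟩
  · obtain ⟨z, hinj, hz⟩ := exists_injective_seq hR hS
    refine Set.infinite_of_injective_forall_mem hinj fun k ↦ ⟨(hz k).1.1, ?_⟩
    rw [(hz k).1.2.2, mul_zero]
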